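/- arXiv:math/0501261 — 2 statements merged into one kernel-verified Lean document; each statement's English description precedes it below -/
import Mathlib

section
/- Let r > 0, σ > 0, μ ≤ 0 and s > 0, and assume r > μ²/(2σ²). For each integer n ≥ 1 set p_n := (2π)^{-1/2} ∫_{-∞}^{-(μ/σ)·√(ns)} e^{-x²/2} dx. Then the series Σ_{n=1}^∞ e^{-rns}·p_n/n converges, and (1 − e^{-s(r − μ²/(2σ²))})^{1/√2} ≤ exp(− Σ_{n=1}^∞ e^{-rns}·p_n/n) ≤ (1 − e^{-s(r + μ²/(2σ²))})^{1/2}. -/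
open scoped Real

/-! Let `Φ` be the standard normal distribution function, so that `p_n = Φ(κ √n)` with
`κ = -(μ/σ) √s`. The tangent bound `Φ(c) ≤ 1/2 + c/√(2π)` for `c ≥ 0` gives
`Φ(c) ≤ e^{c²/2}/√2`, while `Φ(c) ≥ 1/2` for `c ≥ 0`. At `c = κ √n` the factor `e^{c²/2}` is
`e^{κ²n/2}`, which only shifts the discount rate, so both bounds compare the series with
multiples of `∑ e^{-tn}/n = -log (1 - e^{-t})`. -/

section GaussianCDF

open MeasureTheory ProbabilityTheory Set
open scoped NNReal

variable (m : ℝ) {v : ℝ≥0}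

theorem cdf_gaussianReal_eq_integral (hv : v ≠ 0) (x : ℝ) :
    cdf (gaussianReal m v) x = ∫ t in Iic x, gaussianPDFReal m v t := by
  rw [cdf_eq_real, measureReal_def, gaussianReal_apply_eq_integral m hv,
    ENNReal.toReal_ofReal (integral_nonneg fun t => gaussianPDFReal_nonneg m v t)]

theorem cdf_gaussianReal_zero_one (x : ℝ) :
    cdf (gaussianReal 0 1) x =
      (2 * π) ^ (-(1 : ℝ) / 2) * ∫ t in Iic x, Real.exp (-t ^ 2 / 2) := by
  have normalization : (2 * π) ^ (-(1 : ℝ) / 2) = (√(2 * π))⁻¹ := by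
    rw [neg_div, Real.rpow_neg (by positivity), Real.sqrt_eq_rpow]
  rw [cdf_gaussianReal_eq_integral 0 one_ne_zero, normalization, ← integral_const_mul]
  simp only [gaussianPDFReal, NNReal.coe_one, mul_one, sub_zero]

theorem cdf_gaussianReal_mean (hv : v ≠ 0) : cdf (gaussianReal m v) m = 1 / 2 := by
  have := nullSingletonClass_gaussianReal (μ := m) hv
  have reflection : (gaussianReal m v).real (Ioi m) = (gaussianReal m v).real (Iic m) := by
    have map_reflection : (gaussianReal m v).map (2 * m - ·) = gaussianReal m v := by
      rw [gaussianReal_map_const_sub, two_mul, add_sub_cancel_right]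
    conv_rhs => rw [← map_reflection, map_measureReal_apply (by fun_prop) measurableSet_Iic]
    rw [preimage_const_sub_Iic, two_mul, add_sub_cancel_right, measureReal_congr Ioi_ae_eq_Ici]
  have total := probReal_compl_eq_one_sub (μ := gaussianReal m v) (measurableSet_Iic (a := m))
  rw [compl_Iic, reflection] at total
  rw [cdf_eq_real]
  linarith

theorem gaussianPDFReal_le (x : ℝ) : gaussianPDFReal m v x ≤ (√(2 * π * v))⁻¹ := by
  refine mul_le_of_le_one_right (by positivity) (Real.exp_le_one_iff.2 ?_)
  exact div_nonpos_of_nonpos_of_nonneg (neg_nonpos.2 (sq_nonneg _)) (by positivity)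

theorem cdf_gaussianReal_sub_le (hv : v ≠ 0) {a b : ℝ} (hab : a ≤ b) :
    cdf (gaussianReal m v) b - cdf (gaussianReal m v) a ≤ (√(2 * π * v))⁻¹ * (b - a) := by
  have pdf_integrable := integrable_gaussianPDFReal m v
  rw [cdf_gaussianReal_eq_integral m hv, cdf_gaussianReal_eq_integral m hv,
    intervalIntegral.integral_Iic_sub_Iic pdf_integrable.integrableOn pdf_integrable.integrableOn]
  calc ∫ t in a..b, gaussianPDFReal m v t
      ≤ ∫ _ in a..b, (√(2 * π * v))⁻¹ :=
        intervalIntegral.integral_mono hab pdf_integrable.intervalIntegrable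
          intervalIntegrable_const fun _ => gaussianPDFReal_le m _
    _ = (√(2 * π * v))⁻¹ * (b - a) := by
        rw [intervalIntegral.integral_const, smul_eq_mul, mul_comm]

theorem half_add_half_mul_le_exp_sq_half (c : ℝ) :
    1 / 2 + c / 2 ≤ 1 / √2 * Real.exp (c ^ 2 / 2) := by
  have inv_sqrt_two_ge : (7 / 10 : ℝ) ≤ 1 / √2 := by
    rw [le_div_iff₀ (by positivity)]
    have : √2 ≤ 10 / 7 := Real.sqrt_le_iff.2 (by norm_num)
    linarith
  calc 1 / 2 + c / 2 ≤ 7 / 10 * (c ^ 2 / 2 + 1) := by nlinarith [sq_nonneg (c - 5 / 7)]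
    _ ≤ 1 / √2 * Real.exp (c ^ 2 / 2) := by gcongr; exact Real.add_one_le_exp _

theorem cdf_gaussianReal_zero_one_le_exp_sq_half (c : ℝ) :
    cdf (gaussianReal 0 1) c ≤ 1 / √2 * Real.exp (c ^ 2 / 2) := by
  have cdf_zero := cdf_gaussianReal_mean 0 one_ne_zero
  rcases le_total 0 c with hc | hc
  · have tangent : cdf (gaussianReal 0 1) c ≤ 1 / 2 + (√(2 * π))⁻¹ * c := by
      have increment := cdf_gaussianReal_sub_le 0 one_ne_zero hc
      rw [cdf_zero, NNReal.coe_one, mul_one, sub_zero] at increment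
      linarith
    have slope_le : (√(2 * π))⁻¹ ≤ 1 / 2 := by
      rw [one_div]
      exact inv_anti₀ two_pos (Real.le_sqrt_of_sq_le (by linarith [Real.pi_gt_three]))
    calc cdf (gaussianReal 0 1) c ≤ 1 / 2 + 1 / 2 * c := tangent.trans (by gcongr)
      _ = 1 / 2 + c / 2 := by ring
      _ ≤ 1 / √2 * Real.exp (c ^ 2 / 2) := half_add_half_mul_le_exp_sq_half c
  · calc cdf (gaussianReal 0 1) c ≤ 1 / 2 + 0 / 2 := by
          simpa only [cdf_zero, zero_div, add_zero] using monotone_cdf (gaussianReal 0 1) hc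
      _ ≤ 1 / √2 * Real.exp (0 ^ 2 / 2) := half_add_half_mul_le_exp_sq_half 0
      _ ≤ 1 / √2 * Real.exp (c ^ 2 / 2) := by
          gcongr 1 / √2 * Real.exp (?_ / 2)
          simpa only [ne_eq, OfNat.ofNat_ne_zero, not_false_eq_true, zero_pow] using sq_nonneg c

end GaussianCDF

section ExponentialLogSeries

variable {t : ℝ}

theorem one_sub_exp_neg_pos (ht : 0 < t) : 0 < 1 - Real.exp (-t) :=
  sub_pos.2 (Real.exp_lt_one_iff.2 (neg_lt_zero.2 ht))

theorem one_sub_exp_neg_rpow_le_rpow {a b c : ℝ} (ha : 0 ≤ a) (hab : a ≤ b) (hc : 0 ≤ c) :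
    (1 - Real.exp (-a)) ^ c ≤ (1 - Real.exp (-b)) ^ c := by
  have : 0 ≤ 1 - Real.exp (-a) := sub_nonneg.2 (Real.exp_le_one_iff.2 (neg_nonpos.2 ha))
  gcongr

theorem hasSum_exp_neg_mul_div (ht : 0 < t) :
    HasSum (fun n : ℕ => Real.exp (-t * (n + 1)) / (n + 1)) (-Real.log (1 - Real.exp (-t))) := by
  have abs_exp_lt_one : |Real.exp (-t)| < 1 := by
    rw [Real.abs_exp]
    exact Real.exp_lt_one_iff.2 (neg_lt_zero.2 ht)
  refine (Real.hasSum_pow_div_log_of_abs_lt_one abs_exp_lt_one).congr_fun fun n => ?_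
  rw [← Real.exp_nat_mul, Nat.cast_succ, mul_comm]

theorem exp_neg_tsum_const_mul_exp_neg_mul_div (ht : 0 < t) (C : ℝ) :
    Real.exp (-∑' n : ℕ, C * (Real.exp (-t * (n + 1)) / (n + 1))) =
      (1 - Real.exp (-t)) ^ C := by
  rw [((hasSum_exp_neg_mul_div ht).mul_left C).tsum_eq,
    Real.rpow_def_of_pos (one_sub_exp_neg_pos ht)]
  congr 1
  ring

end ExponentialLogSeries

section SpitzerSeries

open ProbabilityTheory

/-- The summand for `k = n + 1` of the Spitzer series `∑_{k ≥ 1} e^{-ρk} P(S_k ≤ 0) / k` of the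
random walk `S` with independent `N(-κ, 1)` steps, for which `P(S_k ≤ 0) = Φ(κ √k)`. -/
noncomputable def spitzerTerm (ρ κ : ℝ) (n : ℕ) : ℝ :=
  Real.exp (-ρ * (n + 1)) * cdf (gaussianReal 0 1) (κ * √(n + 1)) / (n + 1)

theorem spitzerTerm_nonneg (ρ κ : ℝ) (n : ℕ) : 0 ≤ spitzerTerm ρ κ n :=
  div_nonneg (mul_nonneg (Real.exp_pos _).le (cdf_nonneg _ _)) (by positivity)

theorem spitzerTerm_le (ρ κ : ℝ) (n : ℕ) :
    spitzerTerm ρ κ n ≤ 1 / √2 * (Real.exp (-(ρ - κ ^ 2 / 2) * (n + 1)) / (n + 1)) := by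
  have rate_shift : Real.exp (-(ρ - κ ^ 2 / 2) * (n + 1)) =
      Real.exp (-ρ * (n + 1)) * Real.exp ((κ * √(n + 1)) ^ 2 / 2) := by
    rw [← Real.exp_add, mul_pow, Real.sq_sqrt (by positivity)]
    congr 1
    ring
  calc spitzerTerm ρ κ n
      ≤ Real.exp (-ρ * (n + 1)) * (1 / √2 * Real.exp ((κ * √(n + 1)) ^ 2 / 2)) / (n + 1) := by
        unfold spitzerTerm
        gcongr
        exact cdf_gaussianReal_zero_one_le_exp_sq_half _
    _ = 1 / √2 * (Real.exp (-(ρ - κ ^ 2 / 2) * (n + 1)) / (n + 1)) := by rw [rate_shift]; ring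

variable {ρ κ : ℝ}

theorem le_spitzerTerm (hκ : 0 ≤ κ) (n : ℕ) :
    1 / 2 * (Real.exp (-ρ * (n + 1)) / (n + 1)) ≤ spitzerTerm ρ κ n := by
  have half_le_cdf : 1 / 2 ≤ cdf (gaussianReal 0 1) (κ * √(n + 1)) := by
    rw [← cdf_gaussianReal_mean 0 one_ne_zero]
    exact monotone_cdf _ (by positivity)
  calc 1 / 2 * (Real.exp (-ρ * (n + 1)) / (n + 1))
      = Real.exp (-ρ * (n + 1)) * (1 / 2) / (n + 1) := by ring
    _ ≤ spitzerTerm ρ κ n := by unfold spitzerTerm; gcongr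

theorem summable_spitzerTerm (hρ : 0 < ρ) : Summable (spitzerTerm ρ κ) := by
  refine .of_nonneg_of_le (spitzerTerm_nonneg ρ κ) (fun n => ?_)
    (hasSum_exp_neg_mul_div hρ).summable
  unfold spitzerTerm
  gcongr
  exact mul_le_of_le_one_right (Real.exp_pos _).le (cdf_le_one _ _)

theorem rpow_le_exp_neg_tsum_spitzerTerm (h : κ ^ 2 / 2 < ρ) :
    (1 - Real.exp (-(ρ - κ ^ 2 / 2))) ^ (1 / √2) ≤ Real.exp (-∑' n, spitzerTerm ρ κ n) := by
  have hρ : 0 < ρ := lt_of_le_of_lt (by positivity) h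
  have shifted_rate_pos : 0 < ρ - κ ^ 2 / 2 := sub_pos.2 h
  rw [← exp_neg_tsum_const_mul_exp_neg_mul_div shifted_rate_pos]
  exact Real.exp_le_exp.2 <| neg_le_neg <| (summable_spitzerTerm hρ).tsum_le_tsum
    (spitzerTerm_le ρ κ) ((hasSum_exp_neg_mul_div shifted_rate_pos).summable.mul_left _)

theorem exp_neg_tsum_spitzerTerm_le_rpow (hρ : 0 < ρ) (hκ : 0 ≤ κ) :
    Real.exp (-∑' n, spitzerTerm ρ κ n) ≤ (1 - Real.exp (-ρ)) ^ ((1 : ℝ) / 2) := by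
  rw [← exp_neg_tsum_const_mul_exp_neg_mul_div hρ]
  exact Real.exp_le_exp.2 <| neg_le_neg <|
    ((hasSum_exp_neg_mul_div hρ).summable.mul_left _).tsum_le_tsum
      (le_spitzerTerm hκ) (summable_spitzerTerm hρ)

end SpitzerSeries

theorem stmt_3_general (r σ μ s : ℝ) (hr : 0 < r) (hσ : 0 < σ) (hs : 0 < s) :
    let p : ℕ → ℝ := fun n =>
      (2 * π) ^ (-(1 : ℝ) / 2) *
        ∫ x in Set.Iic (-(μ / σ) * √(n * s)), Real.exp (-x ^ 2 / 2)
    Summable (fun n : ℕ => Real.exp (-r * (n + 1) * s) * p (n + 1) / (n + 1)) ∧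
    (μ ^ 2 / (2 * σ ^ 2) < r → (1 - Real.exp (-s * (r - μ ^ 2 / (2 * σ ^ 2)))) ^ (1 / √2) ≤
      Real.exp (-(∑' n : ℕ, Real.exp (-r * (n + 1) * s) * p (n + 1) / (n + 1)))) ∧
    (μ ≤ 0 → Real.exp (-(∑' n : ℕ, Real.exp (-r * (n + 1) * s) * p (n + 1) / (n + 1))) ≤
      (1 - Real.exp (-s * r)) ^ ((1 : ℝ) / 2)) := by
  intro p
  have term_eq : ∀ n : ℕ, Real.exp (-r * (n + 1) * s) * p (n + 1) / (n + 1) =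
      spitzerTerm (s * r) (-(μ / σ) * √s) n := fun n => by
    simp only [p, spitzerTerm, cdf_gaussianReal_zero_one, Nat.cast_succ, mul_comm _ s,
      Real.sqrt_mul hs.le, ← mul_assoc, mul_neg, neg_mul]
  have drift_sq : (-(μ / σ) * √s) ^ 2 / 2 = s * (μ ^ 2 / (2 * σ ^ 2)) := by
    rw [mul_pow, Real.sq_sqrt hs.le]
    field_simp
  have discount_pos : 0 < s * r := mul_pos hs hr
  simp only [term_eq, neg_mul s]
  refine ⟨summable_spitzerTerm discount_pos, fun hrμ => ?_, fun hμ => ?_⟩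
  · rw [mul_sub, ← drift_sq]
    refine rpow_le_exp_neg_tsum_spitzerTerm ?_
    rw [drift_sq]
    gcongr
  · refine exp_neg_tsum_spitzerTerm_le_rpow discount_pos (mul_nonneg ?_ (Real.sqrt_nonneg s))
    exact neg_nonneg.2 (div_nonpos_of_nonpos_of_nonneg hμ hσ.le)

/-- One-dimensional Black–Scholes continuity correction, case `μ ≤ 0` with
`r > μ²/(2σ²)`: with `p_n = (2π)^{-1/2} ∫_{-∞}^{-(μ/σ)√(ns)} e^{-x²/2} dx`, the
series `Σ_{n≥1} e^{-rns} p_n / n` converges and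
`(1 − e^{-s(r−μ²/(2σ²))})^{1/√2} ≤ exp(−Σ) ≤ (1 − e^{-s(r+μ²/(2σ²))})^{1/2}`. -/
theorem stmt_3 (r σ μ s : ℝ) (hr : 0 < r) (hσ : 0 < σ) (hμ : μ ≤ 0) (hs : 0 < s)
    (hrμ : μ ^ 2 / (2 * σ ^ 2) < r) :
    let p : ℕ → ℝ := fun n =>
      (2 * π) ^ (-(1 : ℝ) / 2) *
        ∫ x in Set.Iic (-(μ / σ) * Real.sqrt (n * s)), Real.exp (-x ^ 2 / 2)
    Summable (fun n : ℕ => Real.exp (-r * (n + 1) * s) * p (n + 1) / (n + 1)) ∧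
    (1 - Real.exp (-s * (r - μ ^ 2 / (2 * σ ^ 2)))) ^ (1 / Real.sqrt 2) ≤
      Real.exp (-(∑' n : ℕ, Real.exp (-r * (n + 1) * s) * p (n + 1) / (n + 1))) ∧
    Real.exp (-(∑' n : ℕ, Real.exp (-r * (n + 1) * s) * p (n + 1) / (n + 1))) ≤
      (1 - Real.exp (-s * (r + μ ^ 2 / (2 * σ ^ 2)))) ^ ((1 : ℝ) / 2) := by
  intro p
  obtain ⟨summable, lower, upper⟩ := stmt_3_general r σ μ s hr hσ hs
  refine ⟨summable, lower hrμ, (upper hμ).trans ?_⟩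
  simpa only [neg_mul] using one_sub_exp_neg_rpow_le_rpow (by positivity)
    (mul_le_mul_of_nonneg_left (le_add_of_nonneg_right (by positivity)) hs.le) one_half_pos.le
end

section
/- Assume in addition that H is closed under addition (H + H ⊆ H), that the complement of H is closed under addition, and 0 ∉ H. Then for every q ∈ (0,1), 1 − Σ_{n=0}^∞ qⁿ·R_n(ℝ^d) = exp(− Σ_{n=1}^∞ (qⁿ/n)·μ^{∗n}(H)), where μ^{∗n} denotes the n-fold convolution power of μ (μ^{∗1} = μ, μ^{∗(n+1)} = μ^{∗n} ∗ μ). Both series converge absolutely, and the left-hand side is strictly positive. -/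
open MeasureTheory

/-- Convolution of two Borel measures on `ℝ^d` (pushforward of the product
measure under addition). -/
noncomputable def convAdd {d : ℕ} (μ ν : Measure (EuclideanSpace ℝ (Fin d))) :
    Measure (EuclideanSpace ℝ (Fin d)) :=
  (μ.prod ν).map (fun p => p.1 + p.2)

/-- `Qseq μ H n` is the law at time `n` of the random walk with step law `μ`,
restricted to paths staying outside `H` at times `1, …, n`. -/
noncomputable def Qseq {d : ℕ} (μ : Measure (EuclideanSpace ℝ (Fin d)))
    (H : Set (EuclideanSpace ℝ (Fin d))) : ℕ → Measure (EuclideanSpace ℝ (Fin d))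
  | 0 => Measure.dirac 0
  | n + 1 => (convAdd (Qseq μ H n) μ).restrict Hᶜ

/-- `Rseq μ H n` is the law at time `n` of the random walk with step law `μ`,
restricted to paths that avoid `H` at times `1, …, n−1` and land in `H` at time `n`. -/
noncomputable def Rseq {d : ℕ} (μ : Measure (EuclideanSpace ℝ (Fin d)))
    (H : Set (EuclideanSpace ℝ (Fin d))) : ℕ → Measure (EuclideanSpace ℝ (Fin d))
  | 0 => 0
  | n + 1 => (convAdd (Qseq μ H n) μ).restrict H

/-- `convPowAux μ n = μ^{∗(n+1)}`, the `(n+1)`-fold convolution power of `μ`. -/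
noncomputable def convPowAux {d : ℕ} (μ : Measure (EuclideanSpace ℝ (Fin d))) :
    ℕ → Measure (EuclideanSpace ℝ (Fin d))
  | 0 => μ
  | n + 1 => convAdd (convPowAux μ n) μ

/-!
Split `μ^{∗(n+1)}` into its parts `M n` on `H` and `P n` on `Hᶜ`. Decomposing the walk according to
its first entry into `H` gives, by induction on `n`, the measure identity
`(n + 1) (Q n ∗ μ) + ∑ R i ∗ M j = ∑ Q i ∗ P j + M n`, where the sums are over `i + j = n`.
Since `H` and `Hᶜ` are closed under addition, `R i ∗ M j` lives on `H` and `Q i ∗ P j` on `Hᶜ`, so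
restricting the identity to `Hᶜ` and to `H` decouples it: the first restriction is what the next
induction step needs, the second is `(n + 1) R (n + 1) + ∑ R i ∗ M j = M n`. At the level of total
masses the latter says that the generating function `f` of `R` solves `f' = (1 - f) g'`, where
`g z = ∑ z ^ (n + 1) / (n + 1) * M n (H)`, whence `1 - f = exp (-g)`.
-/

section PowerSeries

open Complex Finset

lemma hasDerivAt_tsum_of_summable_norm {ι : Type*} {F F' : ι → ℂ → ℂ} {u : ι → ℝ} {U : Set ℂ}
    {z : ℂ} (hu : Summable u) (hU : IsOpen U) (hF : ∀ i, ∀ w ∈ U, HasDerivAt (F i) (F' i w) w)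
    (hF_le : ∀ i, ∀ w ∈ U, ‖F i w‖ ≤ u i) (hz : z ∈ U) :
    Summable (fun i => F' i z) ∧ HasDerivAt (fun w => ∑' i, F i w) (∑' i, F' i z) z := by
  have hdiff : ∀ i, DifferentiableOn ℂ (F i) U := fun i w hw =>
    (hF i w hw).differentiableAt.differentiableWithinAt
  have hsum := Complex.hasSum_deriv_of_summable_norm hu hdiff hU hF_le hz
  simp only [fun i => (hF i z hz).deriv] at hsum
  refine ⟨hsum.summable, hsum.tsum_eq ▸ DifferentiableAt.hasDerivAt ?_⟩
  exact (differentiableOn_tsum_of_summable_norm hu hdiff hU hF_le).differentiableAt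
    (hU.mem_nhds hz)

variable {a : ℕ → ℂ} {r : ℝ} {z : ℂ}

lemma norm_pow_mul_le (hz : ‖z‖ ≤ r) (n : ℕ) : ‖z ^ n * a n‖ ≤ r ^ n * ‖a n‖ := by
  rw [norm_mul, norm_pow]
  gcongr

lemma norm_pow_succ_div_mul_le (hz : ‖z‖ ≤ r) (n : ℕ) :
    ‖z ^ (n + 1) / (n + 1) * a n‖ ≤ r * (r ^ n * ‖a n‖) := by
  have hcast : ‖(n : ℂ) + 1‖ = n + 1 := mod_cast Complex.norm_natCast (n + 1)
  calc ‖z ^ (n + 1) / (n + 1) * a n‖ = ‖z‖ ^ (n + 1) / (n + 1) * ‖a n‖ := by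
        rw [norm_mul, norm_div, norm_pow, hcast]
    _ ≤ ‖z‖ ^ (n + 1) * ‖a n‖ := by
        gcongr
        exact div_le_self (by positivity) (by linarith [n.cast_nonneg (α := ℝ)])
    _ ≤ r ^ (n + 1) * ‖a n‖ := by gcongr
    _ = r * (r ^ n * ‖a n‖) := by ring

lemma hasDerivAt_tsum_pow_mul (ha : Summable fun n => r ^ n * ‖a n‖) (hz : ‖z‖ < r) :
    HasDerivAt (fun w => ∑' n, w ^ n * a n) (∑' n : ℕ, z ^ n * ((n + 1) * a (n + 1))) z := by
  obtain ⟨hsum, hderiv⟩ := hasDerivAt_tsum_of_summable_norm ha Metric.isOpen_ball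
    (fun n w _ => (hasDerivAt_pow n w).mul_const (a n))
    (fun n w hw => norm_pow_mul_le (mem_ball_zero_iff.1 hw).le n) (mem_ball_zero_iff.2 hz)
  refine hderiv.congr_deriv ?_
  rw [hsum.tsum_eq_zero_add]
  simp only [Nat.cast_zero, zero_mul, zero_add, Nat.cast_add, Nat.cast_one, Nat.add_sub_cancel]
  exact tsum_congr fun n => by ring

lemma hasDerivAt_tsum_pow_succ_div_mul (ha : Summable fun n => r ^ n * ‖a n‖) (hz : ‖z‖ < r) :
    HasDerivAt (fun w => ∑' n : ℕ, w ^ (n + 1) / (n + 1) * a n) (∑' n, z ^ n * a n) z := by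
  refine (hasDerivAt_tsum_of_summable_norm (F' := fun n w => w ^ n * a n) (ha.mul_left r)
    Metric.isOpen_ball (fun n w _ => ?_)
    (fun n w hw => norm_pow_succ_div_mul_le (mem_ball_zero_iff.1 hw).le n)
    (mem_ball_zero_iff.2 hz)).2
  have hn : (n : ℂ) + 1 ≠ 0 := Nat.cast_add_one_ne_zero n
  refine (((hasDerivAt_pow (n + 1) w).div_const ((n : ℂ) + 1)).mul_const (a n)).congr_deriv ?_
  simp only [Nat.cast_add, Nat.cast_one, Nat.add_sub_cancel, mul_div_cancel_left₀ _ hn]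

lemma eqOn_exp_neg_of_hasDerivAt {f g g' : ℂ → ℂ} {U : Set ℂ} {z₀ : ℂ} (hU : IsOpen U)
    (hU' : IsPreconnected U) (hf : ∀ w ∈ U, HasDerivAt f (-(f w * g' w)) w)
    (hg : ∀ w ∈ U, HasDerivAt g (g' w) w) (hz₀ : z₀ ∈ U) (hfg : f z₀ = exp (-g z₀)) :
    U.EqOn f fun w => exp (-g w) := by
  have hderiv : ∀ w ∈ U, HasDerivAt (fun w => f w * exp (g w)) 0 w := fun w hw =>
    ((hf w hw).mul (hg w hw).cexp).congr_deriv (by ring)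
  intro w hw
  have hconst : f w * exp (g w) = f z₀ * exp (g z₀) :=
    hU.is_const_of_deriv_eq_zero hU'
      (fun x hx => (hderiv x hx).differentiableAt.differentiableWithinAt)
      (fun x hx => (hderiv x hx).deriv) hw hz₀
  rw [hfg, ← exp_add, neg_add_cancel, exp_zero] at hconst
  simpa only [exp_neg] using eq_inv_of_mul_eq_one_left hconst

variable {c : ℕ → ℂ}

lemma hasDerivAt_one_sub_tsum_of_recurrence (ha : Summable fun n => r ^ n * ‖a n‖)
    (hc : Summable fun n => r ^ n * ‖c n‖)
    (hrec : ∀ n : ℕ, (n + 1) * a (n + 1) + ∑ p ∈ antidiagonal n, a p.1 * c p.2 = c n)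
    (hz : ‖z‖ < r) :
    HasDerivAt (fun w => 1 - ∑' n, w ^ n * a n)
      (-((1 - ∑' n, z ^ n * a n) * ∑' n, z ^ n * c n)) z := by
  have hsa : Summable fun n => ‖z ^ n * a n‖ :=
    ha.of_nonneg_of_le (fun _ => norm_nonneg _) (norm_pow_mul_le hz.le)
  have hsc : Summable fun n => ‖z ^ n * c n‖ :=
    hc.of_nonneg_of_le (fun _ => norm_nonneg _) (norm_pow_mul_le hz.le)
  have hcauchy : ∀ n, ∑ p ∈ antidiagonal n, z ^ p.1 * a p.1 * (z ^ p.2 * c p.2) =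
      z ^ n * ∑ p ∈ antidiagonal n, a p.1 * c p.2 := fun n => by
    rw [mul_sum]
    refine sum_congr rfl fun p hp => ?_
    rw [← mem_antidiagonal.1 hp, pow_add]
    ring
  refine ((hasDerivAt_tsum_pow_mul ha hz).const_sub 1).congr_deriv (congrArg Neg.neg ?_)
  rw [sub_mul, one_mul, tsum_mul_tsum_eq_tsum_sum_antidiagonal_of_summable_norm hsa hsc,
    ← hsc.of_norm.tsum_sub (summable_norm_sum_mul_antidiagonal_of_summable_norm hsa hsc).of_norm]
  exact tsum_congr fun n => by rw [hcauchy, ← mul_sub, ← hrec n, add_sub_cancel_right]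

theorem one_sub_tsum_eq_exp_neg_tsum_of_recurrence (ha : Summable fun n => r ^ n * ‖a n‖)
    (hc : Summable fun n => r ^ n * ‖c n‖) (ha₀ : a 0 = 0)
    (hrec : ∀ n : ℕ, (n + 1) * a (n + 1) + ∑ p ∈ antidiagonal n, a p.1 * c p.2 = c n)
    (hz : ‖z‖ < r) :
    1 - ∑' n, z ^ n * a n = exp (-∑' n : ℕ, z ^ (n + 1) / (n + 1) * c n) := by
  refine eqOn_exp_neg_of_hasDerivAt Metric.isOpen_ball (convex_ball 0 r).isPreconnected
    (fun w hw => hasDerivAt_one_sub_tsum_of_recurrence ha hc hrec (mem_ball_zero_iff.1 hw))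
    (fun w hw => hasDerivAt_tsum_pow_succ_div_mul hc (mem_ball_zero_iff.1 hw))
    (Metric.mem_ball_self ((norm_nonneg z).trans_lt hz)) ?_ (mem_ball_zero_iff.2 hz)
  rw [tsum_eq_single 0 fun n hn => by rw [zero_pow hn, zero_mul]]
  simp [ha₀]

end PowerSeries

section Convolution

open Finset

variable {M : Type*} [MeasurableSpace M]

instance sFinite_finsetSum {ι : Type*} (s : Finset ι) (ν : ι → Measure M) [∀ i, SFinite (ν i)] :
    SFinite (∑ i ∈ s, ν i) :=
  sum_induction _ (fun ρ => SFinite ρ) (fun _ _ _ _ => inferInstance) inferInstance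
    fun _ _ => inferInstance

lemma restrict_finsetSum {ι : Type*} (s : Finset ι) (ν : ι → Measure M) (S : Set M) :
    (∑ i ∈ s, ν i).restrict S = ∑ i ∈ s, (ν i).restrict S :=
  map_sum (Measure.restrictₗ S) ν s

variable [AddMonoid M]

lemma nsmul_conv (n : ℕ) (ν ρ : Measure M) [SFinite ρ] : (n • ν) ∗ ρ = n • (ν ∗ ρ) := by
  simpa only [Nat.cast_smul_eq_nsmul] using Measure.conv_smul_left ν ρ (n : ENNReal)

variable [MeasurableAdd₂ M]

lemma sum_conv {ι : Type*} (s : Finset ι) (ν : ι → Measure M) [∀ i, SFinite (ν i)]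
    (ρ : Measure M) [SFinite ρ] : (∑ i ∈ s, ν i) ∗ ρ = ∑ i ∈ s, ν i ∗ ρ := by
  classical
  induction s using Finset.induction_on with
  | empty => rw [sum_empty, sum_empty, Measure.zero_conv]
  | insert i s hi ih => rw [sum_insert hi, sum_insert hi, Measure.add_conv, ih]

lemma conv_univ (ν ρ : Measure M) [SFinite ρ] :
    (ν ∗ ρ) Set.univ = ν Set.univ * ρ Set.univ := by
  rw [Measure.conv, Measure.map_apply measurable_add MeasurableSet.univ, Set.preimage_univ,
    ← Set.univ_prod_univ, Measure.prod_prod]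

lemma ae_mem_conv {S : Set M} (hS : MeasurableSet S) (hadd : ∀ a ∈ S, ∀ b ∈ S, a + b ∈ S)
    {ν ρ : Measure M} [SFinite ν] [SFinite ρ] (hν : ∀ᵐ x ∂ν, x ∈ S) (hρ : ∀ᵐ x ∂ρ, x ∈ S) :
    ∀ᵐ x ∂(ν ∗ ρ), x ∈ S := by
  refine (ae_map_iff measurable_add.aemeasurable hS).2 ?_
  filter_upwards [Measure.quasiMeasurePreserving_fst.ae hν,
    Measure.quasiMeasurePreserving_snd.ae hρ] with p hp₁ hp₂ using hadd _ hp₁ _ hp₂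

end Convolution

section Walk

open Finset

variable {M : Type*} [MeasurableSpace M]

/-- The convolution power `μ^{∗n}`, with `μ^{∗0} = δ₀`. -/
noncomputable def convPow [AddMonoid M] (μ : Measure M) : ℕ → Measure M
  | 0 => Measure.dirac 0
  | n + 1 => convPow μ n ∗ μ

/-- The law at time `n` of the walk with step law `μ` started at `0`, on the event that it avoids
`H` at the times `1, …, n`; this is `Q_n` for a walk in an arbitrary additive monoid. -/
noncomputable def avoidLaw [AddMonoid M] (μ : Measure M) (H : Set M) : ℕ → Measure M
  | 0 => Measure.dirac 0
  | n + 1 => (avoidLaw μ H n ∗ μ).restrict Hᶜ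

/-- The law at time `n` of the walk with step law `μ` started at `0`, on the event that `n ≥ 1` is
its first positive time in `H`; this is `R_n` for a walk in an arbitrary additive monoid. -/
noncomputable def entryLaw [AddMonoid M] (μ : Measure M) (H : Set M) : ℕ → Measure M
  | 0 => 0
  | n + 1 => (avoidLaw μ H n ∗ μ).restrict H

section Instances

variable [AddMonoid M] (μ : Measure M) (H : Set M) (n : ℕ)

instance [SFinite μ] : SFinite (convPow μ n) := by
  induction n <;> rw [convPow] <;> infer_instance

instance [SFinite μ] : SFinite (avoidLaw μ H n) := by
  induction n <;> rw [avoidLaw] <;> infer_instance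

instance [SFinite μ] : SFinite (entryLaw μ H n) := by
  cases n <;> rw [entryLaw] <;> infer_instance

instance [IsFiniteMeasure μ] : IsFiniteMeasure (convPow μ n) := by
  induction n <;> rw [convPow] <;> infer_instance

instance [IsFiniteMeasure μ] : IsFiniteMeasure (avoidLaw μ H n) := by
  induction n <;> rw [avoidLaw] <;> infer_instance

instance [IsFiniteMeasure μ] : IsFiniteMeasure (entryLaw μ H n) := by
  cases n <;> rw [entryLaw] <;> infer_instance

end Instances

section AddMonoid

variable [AddMonoid M] {μ : Measure M} {H : Set M}

lemma avoidLaw_conv (hH : MeasurableSet H) (n : ℕ) :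
    avoidLaw μ H n ∗ μ = avoidLaw μ H (n + 1) + entryLaw μ H (n + 1) := by
  rw [avoidLaw, entryLaw, Measure.restrict_compl_add_restrict hH]

lemma ae_mem_entryLaw (hH : MeasurableSet H) (n : ℕ) : ∀ᵐ x ∂entryLaw μ H n, x ∈ H := by
  cases n with
  | zero => simp [entryLaw]
  | succ n => exact ae_restrict_mem hH

variable [MeasurableAdd₂ M]

lemma convPow_univ [SFinite μ] (n : ℕ) : convPow μ n Set.univ = μ Set.univ ^ n := by
  induction n with
  | zero => rw [convPow, measure_univ, pow_zero]
  | succ n ih => rw [convPow, conv_univ, ih, pow_succ]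

lemma convPow_succ_eq_add_sum [SFinite μ] (hH : MeasurableSet H) (n : ℕ) :
    convPow μ (n + 1) = avoidLaw μ H n ∗ μ +
      ∑ p ∈ antidiagonal n, entryLaw μ H p.1 ∗ convPow μ (p.2 + 1) := by
  induction n with
  | zero => simp [avoidLaw, entryLaw, convPow]
  | succ n ih =>
    rw [convPow, ih, Measure.add_conv, sum_conv, Nat.sum_antidiagonal_succ', avoidLaw_conv hH n,
      Measure.add_conv, add_assoc]
    simp only [Measure.conv_assoc, convPow, Measure.dirac_zero_conv]

lemma entryLaw_succ_le_convPow [SFinite μ] (hH : MeasurableSet H) (n : ℕ) :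
    entryLaw μ H (n + 1) ≤ convPow μ (n + 1) :=
  calc entryLaw μ H (n + 1) ≤ avoidLaw μ H n ∗ μ := Measure.restrict_le_self
    _ ≤ convPow μ (n + 1) := by
      rw [convPow_succ_eq_add_sum hH n]
      exact Measure.le_add_right le_rfl

lemma measureReal_convPow_le [IsFiniteMeasure μ] (n : ℕ) (S : Set M) :
    (convPow μ n).real S ≤ μ.real Set.univ ^ n := by
  refine (measureReal_mono S.subset_univ).trans_eq ?_
  rw [measureReal_def, convPow_univ, ENNReal.toReal_pow, measureReal_def]

lemma measureReal_entryLaw_le [IsFiniteMeasure μ] (hH : MeasurableSet H) (n : ℕ) (S : Set M) :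
    (entryLaw μ H n).real S ≤ μ.real Set.univ ^ n := by
  cases n with
  | zero => simp [entryLaw]
  | succ n =>
    refine le_trans ?_ (measureReal_convPow_le (n + 1) S)
    exact ENNReal.toReal_mono (measure_ne_top _ _) (entryLaw_succ_le_convPow hH n S)

lemma ae_mem_entryLaw_conv_restrict [SFinite μ] (hH : MeasurableSet H)
    (hHadd : ∀ a ∈ H, ∀ b ∈ H, a + b ∈ H) (n : ℕ) (ν : Measure M) [SFinite ν] :
    ∀ᵐ x ∂(entryLaw μ H n ∗ ν.restrict H), x ∈ H :=
  ae_mem_conv hH hHadd (ae_mem_entryLaw hH n) (ae_restrict_mem hH)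

lemma ae_mem_compl_avoidLaw_conv_restrict_compl [SFinite μ] (hH : MeasurableSet H)
    (hHcadd : ∀ a ∈ Hᶜ, ∀ b ∈ Hᶜ, a + b ∈ Hᶜ) (n : ℕ) (ν : Measure M) [SFinite ν] :
    ∀ᵐ x ∂(avoidLaw μ H n ∗ ν.restrict Hᶜ), x ∈ Hᶜ := by
  cases n with
  | zero =>
    rw [avoidLaw, Measure.dirac_zero_conv]
    exact ae_restrict_mem hH.compl
  | succ n =>
    exact ae_mem_conv hH.compl hHcadd (ae_restrict_mem hH.compl) (ae_restrict_mem hH.compl)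

end AddMonoid

variable [AddCommMonoid M] [MeasurableAdd₂ M] {μ : Measure M} {H : Set M}

/-- The identity of measures from which the recursions of both `avoidLaw` and `entryLaw` are
obtained, by restriction to `Hᶜ` and to `H`. -/
def BalanceIdentity (μ : Measure M) (H : Set M) (n : ℕ) : Prop :=
  (n + 1) • (avoidLaw μ H n ∗ μ) +
      ∑ p ∈ antidiagonal n, entryLaw μ H p.1 ∗ (convPow μ (p.2 + 1)).restrict H =
    ∑ p ∈ antidiagonal n, avoidLaw μ H p.1 ∗ (convPow μ (p.2 + 1)).restrict Hᶜ +
      (convPow μ (n + 1)).restrict H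

namespace BalanceIdentity

lemma restrict_compl [SFinite μ] (hH : MeasurableSet H)
    (hHadd : ∀ a ∈ H, ∀ b ∈ H, a + b ∈ H) (hHcadd : ∀ a ∈ Hᶜ, ∀ b ∈ Hᶜ, a + b ∈ Hᶜ) {n : ℕ}
    (h : BalanceIdentity μ H n) :
    (n + 1) • avoidLaw μ H (n + 1) =
      ∑ p ∈ antidiagonal n, avoidLaw μ H p.1 ∗ (convPow μ (p.2 + 1)).restrict Hᶜ := by
  have hR : ∀ p : ℕ × ℕ,
      (entryLaw μ H p.1 ∗ (convPow μ (p.2 + 1)).restrict H).restrict Hᶜ = 0 := fun p =>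
    Measure.restrict_eq_zero.2 (ae_mem_entryLaw_conv_restrict hH hHadd _ _)
  have hQ : ∀ p : ℕ × ℕ, (avoidLaw μ H p.1 ∗ (convPow μ (p.2 + 1)).restrict Hᶜ).restrict Hᶜ =
      avoidLaw μ H p.1 ∗ (convPow μ (p.2 + 1)).restrict Hᶜ := fun p =>
    Measure.restrict_eq_self_of_ae_mem (ae_mem_compl_avoidLaw_conv_restrict_compl hH hHcadd _ _)
  have hM : ((convPow μ (n + 1)).restrict H).restrict Hᶜ = 0 :=
    Measure.restrict_eq_zero.2 (ae_restrict_mem hH)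
  rw [avoidLaw]
  simpa only [Measure.restrict_add, Measure.restrict_smul, restrict_finsetSum, hR, hQ, hM,
    sum_const_zero, add_zero] using congrArg (fun ν => ν.restrict Hᶜ) h

lemma restrict [SFinite μ] (hH : MeasurableSet H)
    (hHadd : ∀ a ∈ H, ∀ b ∈ H, a + b ∈ H) (hHcadd : ∀ a ∈ Hᶜ, ∀ b ∈ Hᶜ, a + b ∈ Hᶜ) {n : ℕ}
    (h : BalanceIdentity μ H n) :
    (n + 1) • entryLaw μ H (n + 1) +
        ∑ p ∈ antidiagonal n, entryLaw μ H p.1 ∗ (convPow μ (p.2 + 1)).restrict H =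
      (convPow μ (n + 1)).restrict H := by
  have hR : ∀ p : ℕ × ℕ, (entryLaw μ H p.1 ∗ (convPow μ (p.2 + 1)).restrict H).restrict H =
      entryLaw μ H p.1 ∗ (convPow μ (p.2 + 1)).restrict H := fun p =>
    Measure.restrict_eq_self_of_ae_mem (ae_mem_entryLaw_conv_restrict hH hHadd _ _)
  have hQ : ∀ p : ℕ × ℕ,
      (avoidLaw μ H p.1 ∗ (convPow μ (p.2 + 1)).restrict Hᶜ).restrict H = 0 := fun p =>
    Measure.restrict_eq_zero.2 <| measure_eq_zero_iff_ae_notMem.2 <|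
      ae_mem_compl_avoidLaw_conv_restrict_compl hH hHcadd p.1 (convPow μ (p.2 + 1))
  have hM : ((convPow μ (n + 1)).restrict H).restrict H = (convPow μ (n + 1)).restrict H :=
    Measure.restrict_eq_self_of_ae_mem (ae_restrict_mem hH)
  rw [entryLaw]
  simpa only [Measure.restrict_add, Measure.restrict_smul, restrict_finsetSum, hR, hQ, hM,
    sum_const_zero, zero_add] using congrArg (fun ν => ν.restrict H) h

lemma succ [SFinite μ] (hH : MeasurableSet H) {n : ℕ}
    (h : (n + 1) • avoidLaw μ H (n + 1) =
      ∑ p ∈ antidiagonal n, avoidLaw μ H p.1 ∗ (convPow μ (p.2 + 1)).restrict Hᶜ) :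
    BalanceIdentity μ H (n + 1) := by
  set A := ∑ p ∈ antidiagonal n, avoidLaw μ H (p.1 + 1) ∗ (convPow μ (p.2 + 1)).restrict Hᶜ
  set B := ∑ p ∈ antidiagonal n, entryLaw μ H (p.1 + 1) ∗ (convPow μ (p.2 + 1)).restrict Hᶜ
  set C := ∑ p ∈ antidiagonal n, entryLaw μ H (p.1 + 1) ∗ (convPow μ (p.2 + 1)).restrict H
  have havoid : (n + 1) • (avoidLaw μ H (n + 1) ∗ μ) = A + B := by
    rw [← nsmul_conv, h, sum_conv, ← sum_add_distrib]
    refine sum_congr rfl fun p _ => ?_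
    rw [Measure.conv_assoc, Measure.conv_comm _ μ, ← Measure.conv_assoc, avoidLaw_conv hH,
      Measure.add_conv]
  have hentry : ∑ p ∈ antidiagonal (n + 1), entryLaw μ H p.1 ∗ convPow μ (p.2 + 1) = C + B := by
    rw [Nat.sum_antidiagonal_succ, entryLaw, Measure.zero_conv, zero_add, ← sum_add_distrib]
    refine sum_congr rfl fun p _ => ?_
    rw [← Measure.conv_add, Measure.restrict_add_restrict_compl hH]
  rw [BalanceIdentity, Nat.sum_antidiagonal_succ, Nat.sum_antidiagonal_succ, entryLaw, avoidLaw,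
    Measure.zero_conv, zero_add, Measure.dirac_zero_conv]
  calc (n + 1 + 1) • (avoidLaw μ H (n + 1) ∗ μ) + C
      = A + (avoidLaw μ H (n + 1) ∗ μ + (C + B)) := by
        rw [succ_nsmul, havoid]
        abel
    _ = A + convPow μ (n + 1 + 1) := by rw [convPow_succ_eq_add_sum hH (n + 1), hentry]
    _ = A + ((convPow μ (n + 1 + 1)).restrict H + (convPow μ (n + 1 + 1)).restrict Hᶜ) := by
        rw [Measure.restrict_add_restrict_compl hH]
    _ = (convPow μ (n + 1 + 1)).restrict Hᶜ + A + (convPow μ (n + 1 + 1)).restrict H := by abel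

end BalanceIdentity

theorem balanceIdentity [SFinite μ] (hH : MeasurableSet H)
    (hHadd : ∀ a ∈ H, ∀ b ∈ H, a + b ∈ H) (hHcadd : ∀ a ∈ Hᶜ, ∀ b ∈ Hᶜ, a + b ∈ Hᶜ) (n : ℕ) :
    BalanceIdentity μ H n := by
  induction n with
  | zero =>
    simp [BalanceIdentity, avoidLaw, entryLaw, convPow, Measure.restrict_compl_add_restrict hH]
  | succ n ih => exact .succ hH (ih.restrict_compl hH hHadd hHcadd)

theorem measureReal_entryLaw_recurrence [IsFiniteMeasure μ] (hH : MeasurableSet H)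
    (hHadd : ∀ a ∈ H, ∀ b ∈ H, a + b ∈ H) (hHcadd : ∀ a ∈ Hᶜ, ∀ b ∈ Hᶜ, a + b ∈ Hᶜ) (n : ℕ) :
    (n + 1) * (entryLaw μ H (n + 1)).real Set.univ + ∑ p ∈ antidiagonal n,
        (entryLaw μ H p.1).real Set.univ * (convPow μ (p.2 + 1)).real H =
      (convPow μ (n + 1)).real H := by
  have hmass := congrArg (fun ν => ν Set.univ)
    ((balanceIdentity (μ := μ) hH hHadd hHcadd n).restrict hH hHadd hHcadd)
  simp only [Measure.add_apply, Measure.smul_apply, Measure.finsetSum_apply, conv_univ,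
    Measure.restrict_apply_univ, nsmul_eq_mul] at hmass
  simp only [measureReal_def, ← hmass]
  have hfin : ∀ p ∈ antidiagonal n,
      entryLaw μ H p.1 Set.univ * convPow μ (p.2 + 1) H ≠ ⊤ := fun p _ => by finiteness
  rw [ENNReal.toReal_add (by finiteness) (ENNReal.sum_ne_top.2 hfin), ENNReal.toReal_sum hfin]
  simp only [ENNReal.toReal_mul, ENNReal.toReal_natCast, Nat.cast_succ (R := ℝ)]

end Walk

lemma summable_pow_mul_norm_of_le_mul_pow {a : ℕ → ℝ} {C m r : ℝ} (ha : ∀ n, 0 ≤ a n)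
    (ham : ∀ n, a n ≤ C * m ^ n) (hr : 0 ≤ r) (hm : 0 ≤ m) (hrm : r * m < 1) :
    Summable fun n => r ^ n * ‖(a n : ℂ)‖ := by
  refine ((summable_geometric_of_lt_one (mul_nonneg hr hm) hrm).mul_left C).of_nonneg_of_le
    (fun n => by positivity) fun n => ?_
  calc r ^ n * ‖(a n : ℂ)‖ ≤ r ^ n * (C * m ^ n) := by
        rw [Complex.norm_of_nonneg (ha n)]
        gcongr
        exact ham n
    _ = C * (r * m) ^ n := by ring

theorem stmt_6_general {M : Type*} [AddCommMonoid M] [MeasurableSpace M] [MeasurableAdd₂ M]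
    {μ : Measure M} [IsFiniteMeasure μ] {H : Set M} (hH : MeasurableSet H)
    (hHadd : ∀ a ∈ H, ∀ b ∈ H, a + b ∈ H) (hHcadd : ∀ a ∈ Hᶜ, ∀ b ∈ Hᶜ, a + b ∈ Hᶜ)
    {q : ℂ} (hq : ‖q‖ * μ.real Set.univ < 1) :
    Summable (fun n => q ^ n * ((entryLaw μ H n).real Set.univ : ℂ)) ∧
    Summable (fun n : ℕ => q ^ (n + 1) / (n + 1) * ((convPow μ (n + 1)).real H : ℂ)) ∧
    1 - ∑' n, q ^ n * ((entryLaw μ H n).real Set.univ : ℂ) =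
      Complex.exp (-∑' n : ℕ, q ^ (n + 1) / (n + 1) * ((convPow μ (n + 1)).real H : ℂ)) := by
  obtain ⟨r, hqr, hr⟩ : ∃ r > ‖q‖, r * μ.real Set.univ < 1 :=
    ((continuous_mul_const (μ.real Set.univ)).continuousAt.eventually_lt_const hq).exists_gt
  have hr₀ : 0 ≤ r := (norm_nonneg q).trans hqr.le
  have hR := summable_pow_mul_norm_of_le_mul_pow (fun _ => measureReal_nonneg)
    (fun n => (measureReal_entryLaw_le hH n Set.univ).trans_eq (one_mul _).symm)
    hr₀ measureReal_nonneg hr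
  have hP := summable_pow_mul_norm_of_le_mul_pow (fun _ => measureReal_nonneg)
    (fun n => (measureReal_convPow_le (n + 1) H).trans_eq (pow_succ' _ n))
    hr₀ measureReal_nonneg hr
  refine ⟨.of_norm_bounded hR (norm_pow_mul_le hqr.le),
    .of_norm_bounded (hP.mul_left r) (norm_pow_succ_div_mul_le hqr.le),
    one_sub_tsum_eq_exp_neg_tsum_of_recurrence hR hP (by simp [entryLaw]) (fun n => ?_) hqr⟩
  exact_mod_cast measureReal_entryLaw_recurrence hH hHadd hHcadd n

section EuclideanSpace

variable {d : ℕ} (μ : Measure (EuclideanSpace ℝ (Fin d))) (H : Set (EuclideanSpace ℝ (Fin d)))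
  (n : ℕ)

lemma Qseq_eq_avoidLaw : Qseq μ H n = avoidLaw μ H n := by
  induction n with
  | zero => rfl
  | succ n ih => rw [Qseq, ih, avoidLaw, convAdd, Measure.conv]

lemma Rseq_eq_entryLaw : Rseq μ H n = entryLaw μ H n := by
  cases n with
  | zero => rfl
  | succ n => rw [Rseq, Qseq_eq_avoidLaw, entryLaw, convAdd, Measure.conv]

lemma convPowAux_eq_convPow_succ [SFinite μ] : convPowAux μ n = convPow μ (n + 1) := by
  induction n with
  | zero => simp only [convPowAux, convPow, Measure.dirac_zero_conv]
  | succ n ih => rw [convPowAux, ih, convAdd, ← Measure.conv, ← convPow]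

end EuclideanSpace

/-- Feller–Wiener–Hopf identity at frequency `ζ = 0`: if `H` and its complement
are both closed under addition and `0 ∉ H`, then for every `q ∈ (0,1)`,
`1 − Σ_{n≥0} qⁿ R_n(ℝ^d) = exp(− Σ_{n≥1} (qⁿ/n) μ^{∗n}(H))`; both series
converge and the left-hand side is strictly positive. -/
theorem stmt_6 {d : ℕ} (μ : Measure (EuclideanSpace ℝ (Fin d)))
    [IsProbabilityMeasure μ] (H : Set (EuclideanSpace ℝ (Fin d)))
    (hH : MeasurableSet H) (h0 : (0 : EuclideanSpace ℝ (Fin d)) ∉ H)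
    (hHadd : ∀ a ∈ H, ∀ b ∈ H, a + b ∈ H)
    (hHcadd : ∀ a ∈ Hᶜ, ∀ b ∈ Hᶜ, a + b ∈ Hᶜ)
    (q : ℝ) (hq : q ∈ Set.Ioo (0 : ℝ) 1) :
    Summable (fun n : ℕ => q ^ n * ((Rseq μ H n) Set.univ).toReal) ∧
    Summable (fun n : ℕ => q ^ (n + 1) / (n + 1) * ((convPowAux μ n) H).toReal) ∧
    0 < 1 - ∑' n : ℕ, q ^ n * ((Rseq μ H n) Set.univ).toReal ∧
    1 - ∑' n : ℕ, q ^ n * ((Rseq μ H n) Set.univ).toReal =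
      Real.exp (-∑' n : ℕ, q ^ (n + 1) / (n + 1) * ((convPowAux μ n) H).toReal) := by
  have hq' : ‖(q : ℂ)‖ * μ.real Set.univ < 1 := by
    simpa [abs_of_pos hq.1] using hq.2
  obtain ⟨hR, hP, hexp⟩ := stmt_6_general hH hHadd hHcadd hq'
  simp only [Rseq_eq_entryLaw, convPowAux_eq_convPow_succ, ← measureReal_def]
  norm_cast at hR hP hexp
  push_cast at hP hexp
  exact ⟨hR, hP, hexp ▸ Real.exp_pos _, hexp⟩
end
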